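/- Let p be a prime and let F be a separable primitive binary form of degree n ≥ 3 over ℤ_p with leading coefficient f_0 ≠ 0, with canonical factorization F = ∏_{i=1}^{m} F_i. Then R_F is maximal if and only if R_{F_i} is maximal for every i ∈ {1, …, m} with F_i nonconstant. Under these equivalent conditions, every nonconstant F_i is irreducible over ℤ_p, and R_F is isomorphic as a ℤ_p-algebra to the product ∏_{i} R_{F_i} over the nonconstant factors F_i. -/

import Mathlib

open Polynomial Matrix MeasureTheory
open scoped Classical
noncomputable section
namespace BHS



/-! ### Binary forms and the rings they cut out, over a general base -/

variable (R K : Type) [CommRing R] [Field K] [Algebra R K]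

/-- The one-variable polynomial `F(x,1)` of the binary form of degree `n` with
coefficient vector `c` (so `F(x,z) = ∑ c i · x^(n-i) · z^i`), over `K`. -/
def binPoly (n : ℕ) (c : ℕ → R) : Polynomial K :=
  ∑ i ∈ Finset.range (n + 1), Polynomial.C (algebraMap R K (c i)) * Polynomial.X ^ (n - i)

/-- The étale algebra `K_F = K[x]/(F(x,1))`. -/
abbrev KF (n : ℕ) (c : ℕ → R) : Type := AdjoinRoot (binPoly R K n c)

/-- θ, the image of x in K_F. -/
def θF (n : ℕ) (c : ℕ → R) : KF R K n c := AdjoinRoot.root _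

/-- `ζ_i = ∑_{j<i} f_j θ^{i-j}`. -/
def ζF (n : ℕ) (c : ℕ → R) (i : ℕ) : KF R K n c :=
  ∑ j ∈ Finset.range i, algebraMap R (KF R K n c) (c j) * θF R K n c ^ (i - j)

/-- The ring `R_F`, as the free `R`-submodule of `K_F` with basis `1, ζ_1, …, ζ_{n-1}`
(a subring by Nakagawa's theorem). -/
def RFmod (n : ℕ) (c : ℕ → R) : Submodule R (KF R K n c) :=
  Submodule.span R ({1} ∪ {x | ∃ i, 1 ≤ i ∧ i ≤ n - 1 ∧ x = ζF R K n c i})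

/-- The fractional ideal `I_F^k`, as the free `R`-submodule of `K_F` with basis
`1, θ, …, θ^k, ζ_{k+1}, …, ζ_{n-1}`. -/
def IFmod (n : ℕ) (c : ℕ → R) (k : ℕ) : Submodule R (KF R K n c) :=
  Submodule.span R ({x | ∃ j ≤ k, x = θF R K n c ^ j} ∪
    {x | ∃ i, k + 1 ≤ i ∧ i ≤ n - 1 ∧ x = ζF R K n c i})

/-- `R_F` is the maximal order (the integral closure of `R`) in `K_F`. -/
def IsMaxOrder (n : ℕ) (c : ℕ → R) : Prop :=
  RFmod R K n c = Subalgebra.toSubmodule (integralClosure R (KF R K n c))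

/-- `M` is stable under multiplication by `R_F`, i.e. `M` is an `R_F`-submodule of `K_F`. -/
def IsStable (n : ℕ) (c : ℕ → R) (M : Submodule R (KF R K n c)) : Prop :=
  ∀ ρ ∈ RFmod R K n c, ∀ x ∈ M, ρ * x ∈ M

/-- `M` is an invertible fractional ideal of `R_F`. -/
def IsInvIdeal (n : ℕ) (c : ℕ → R) (M : Submodule R (KF R K n c)) : Prop :=
  IsStable R K n c M ∧
    ∃ N : Submodule R (KF R K n c), IsStable R K n c N ∧ M * N = RFmod R K n c

/-- The principal fractional ideal of `R_F` generated by `α`. -/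
def principal (n : ℕ) (c : ℕ → R) (α : KF R K n c) : Submodule R (KF R K n c) :=
  Submodule.span R {α} * RFmod R K n c

/-- `ρ` is a unit of the order `R_F`. -/
def IsUnitRF (n : ℕ) (c : ℕ → R) (ρ : KF R K n c) : Prop :=
  ρ ∈ RFmod R K n c ∧ ∃ σ ∈ RFmod R K n c, ρ * σ = 1

/-- `#R_F^×[2]`, the number of 2-torsion units of `R_F`. -/
def twoTorsUnitsCount (n : ℕ) (c : ℕ → R) : ℕ :=
  Nat.card {ρ : KF R K n c // ρ ∈ RFmod R K n c ∧ ρ ^ 2 = 1}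

/-- The number of 2-torsion elements of the ideal class group `Cl(R_F)`: the number of
invertible fractional ideals of `R_F` whose square is principal, counted modulo
principal fractional ideals. -/
def clTwoCount (n : ℕ) (c : ℕ → R) : ℕ :=
  Nat.card (Quot (fun (I J : {M : Submodule R (KF R K n c) //
      IsInvIdeal R K n c M ∧
        ∃ α : KF R K n c, IsUnit α ∧ M * M = principal R K n c α}) =>
    ∃ α : KF R K n c, IsUnit α ∧
      (I : Submodule R (KF R K n c)) =
        Submodule.span R {α} * (J : Submodule R (KF R K n c))))

/-- `α ∈ K_F` is totally positive: positive under every real embedding. -/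
def TotPos (n : ℕ) (c : ℕ → R) (α : KF R K n c) : Prop :=
  ∀ φ : KF R K n c →+* ℝ, 0 < φ α

/-- The number of 2-torsion elements of the narrow class group `Cl⁺(R_F)`. -/
def clTwoCountPlus (n : ℕ) (c : ℕ → R) : ℕ :=
  Nat.card (Quot (fun (I J : {M : Submodule R (KF R K n c) //
      IsInvIdeal R K n c M ∧
        ∃ α : KF R K n c, IsUnit α ∧ TotPos R K n c α ∧ M * M = principal R K n c α}) =>
    ∃ α : KF R K n c, IsUnit α ∧ TotPos R K n c α ∧
      (I : Submodule R (KF R K n c)) =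
        Submodule.span R {α} * (J : Submodule R (KF R K n c))))

/-- The order of the ideal class group of `R_F`. -/
def clCount (n : ℕ) (c : ℕ → R) : ℕ :=
  Nat.card (Quot (fun (I J : {M : Submodule R (KF R K n c) // IsInvIdeal R K n c M}) =>
    ∃ α : KF R K n c, IsUnit α ∧
      (I : Submodule R (KF R K n c)) =
        Submodule.span R {α} * (J : Submodule R (KF R K n c))))

/-- The order of the narrow class group of `R_F`. -/
def clCountPlus (n : ℕ) (c : ℕ → R) : ℕ :=
  Nat.card (Quot (fun (I J : {M : Submodule R (KF R K n c) // IsInvIdeal R K n c M}) =>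
    ∃ α : KF R K n c, IsUnit α ∧ TotPos R K n c α ∧
      (I : Submodule R (KF R K n c)) =
        Submodule.span R {α} * (J : Submodule R (KF R K n c))))




/-! ### p-adic machinery -/

variable (p : ℕ) [Fact p.Prime]

instance : MeasurableSpace ℤ_[p] := borel _
instance : BorelSpace ℤ_[p] := ⟨rfl⟩

/-- Haar probability measure on `ℤ_p^n`. -/
def haarP (n : ℕ) : Measure (Fin n → ℤ_[p]) :=
  Measure.addHaarMeasure ⟨⟨Set.univ, isCompact_univ⟩, by rw [interior_univ]; exact Set.univ_nonempty⟩

/-- The `p`-adic density of `A` within `B` (subsets of the coefficient space `ℤ_p^n`). -/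
def densIn (n : ℕ) (A B : Set (Fin n → ℤ_[p])) : ℝ :=
  (haarP p n A).toReal / (haarP p n B).toReal

/-- The coefficient vector of the degree-`n` binary form with leading coefficient `f0` and
remaining coefficients `v`. -/
def consF0 (n : ℕ) (f0 : ℤ_[p]) (v : Fin n → ℤ_[p]) : ℕ → ℤ_[p] :=
  fun j => if j = 0 then f0 else if h : j - 1 < n then v ⟨j - 1, h⟩ else 0

/-- The reduction of the binary form with coefficients `c` modulo `p`, as a polynomial in
two variables `x = X 0`, `z = X 1` over `F_p`. -/
def redForm (n : ℕ) (c : ℕ → ℤ_[p]) : MvPolynomial (Fin 2) (ZMod p) :=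
  ∑ i ∈ Finset.range (n + 1),
    MvPolynomial.C (PadicInt.toZMod (c i)) * MvPolynomial.X 0 ^ (n - i) * MvPolynomial.X 1 ^ i

/-- `F` is squareful over `ℤ_p`: `F ≡ κ·z^{e}·H² (mod p)` with `e > 0`, `κ ∈ F_p^×` and
`H` a monic binary form over `F_p` (hence not divisible by `z`). -/
def SquarefulP (n : ℕ) (c : ℕ → ℤ_[p]) : Prop :=
  ∃ (κ : (ZMod p)ˣ) (e d : ℕ) (H : MvPolynomial (Fin 2) (ZMod p)),
    0 < e ∧ H.IsHomogeneous d ∧ MvPolynomial.coeff (Finsupp.single 0 d) H = 1 ∧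
    redForm p n c = MvPolynomial.C (κ : ZMod p) * MvPolynomial.X 1 ^ e * H ^ 2

/-- `F` is evenly ramified over `ℤ_p`: `F ≡ κ·H² (mod p)` with `κ ∈ F_p^×`. -/
def EvenRamP (n : ℕ) (c : ℕ → ℤ_[p]) : Prop :=
  ∃ (κ : (ZMod p)ˣ) (H : MvPolynomial (Fin 2) (ZMod p)),
    redForm p n c = MvPolynomial.C (κ : ZMod p) * H ^ 2

/-- `F` is primitive over `ℤ_p`: its coefficients generate the unit ideal. -/
def PrimP (n : ℕ) (c : ℕ → ℤ_[p]) : Prop := ∃ i ≤ n, IsUnit (c i)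

/-- `F` is separable (of degree `n`) over `ℚ_p`. -/
def SepDegP (n : ℕ) (c : ℕ → ℤ_[p]) : Prop :=
  (binPoly ℤ_[p] ℚ_[p] n c).Separable ∧ (binPoly ℤ_[p] ℚ_[p] n c).natDegree = n

/-- The determinant of the Sylvester matrix of `F(x,1)` (of formal degree n) and
`F'(x,1)` (of formal degree n-1); it equals `±f_0` times the discriminant of the form. -/
def sylvDet (S : Type) [CommRing S] (n : ℕ) (c : ℕ → S) : S :=
  Matrix.det (Matrix.of (fun (i j : Fin (n + (n - 1))) =>
    if (i : ℕ) < n - 1 then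
      (if (i : ℕ) ≤ (j : ℕ) ∧ (j : ℕ) ≤ (i : ℕ) + n then c ((j : ℕ) - (i : ℕ)) else 0)
    else
      (if (i : ℕ) - (n - 1) ≤ (j : ℕ) ∧ (j : ℕ) ≤ ((i : ℕ) - (n - 1)) + (n - 1) then
        ((n - ((j : ℕ) - ((i : ℕ) - (n - 1))) : ℕ) : S) * c ((j : ℕ) - ((i : ℕ) - (n - 1)))
      else 0)))

/-- The discriminant of the form with coefficients `c` is not divisible by `p²`. -/
def DiscOK (n : ℕ) (c : ℕ → ℤ_[p]) : Prop :=
  ¬ ((p : ℤ_[p]) ^ 2 * c 0 ∣ sylvDet ℤ_[p] n c)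

/-- The reduction modulo `p` of the degree-`n` binary form with coefficients `c` is a
separable binary form over `F_p`. -/
def SepFormModP (n : ℕ) (c : ℕ → ℤ_[p]) : Prop :=
  (∑ i ∈ Finset.range (n + 1),
      Polynomial.C (PadicInt.toZMod (c i)) * (Polynomial.X : Polynomial (ZMod p)) ^ (n - i)).Separable ∧
  n - 1 ≤ (∑ i ∈ Finset.range (n + 1),
      Polynomial.C (PadicInt.toZMod (c i)) * (Polynomial.X : Polynomial (ZMod p)) ^ (n - i)).natDegree



/-- The binary form `F(x,1)` as a polynomial over the base ring itself. -/
def binPolyR (S : Type) [CommRing S] (n : ℕ) (c : ℕ → S) : Polynomial S :=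
  ∑ i ∈ Finset.range (n + 1), Polynomial.C (c i) * Polynomial.X ^ (n - i)

/-- The reduction modulo `p` of `F(x,1)` for a form of degree `d`. -/
def redPolyDeg (p : ℕ) [Fact p.Prime] (d : ℕ) (c : ℕ → ℤ_[p]) : Polynomial (ZMod p) :=
  ∑ i ∈ Finset.range (d + 1),
    Polynomial.C (PadicInt.toZMod (c i)) * Polynomial.X ^ (d - i)

/-- The ring `R_F` as a subalgebra of `K_F` (generated by the `ζ_i`; by Nakagawa's theorem
this coincides with the span of `1, ζ_1, …, ζ_{n-1}`). -/
def RFalg (R K : Type) [CommRing R] [Field K] [Algebra R K] (n : ℕ) (c : ℕ → R) :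
    Subalgebra R (KF R K n c) :=
  Algebra.adjoin R {x | ∃ i, 1 ≤ i ∧ i ≤ n - 1 ∧ x = ζF R K n c i}

/-!
The ring `R_F` is the multiplier ring of the lattice `I_F = ⊕_{j<n} R θ^j`. For a factorization of
`F` into pairwise coprime forms, of which at most one is not monic, partial fractions over `R` show
that the Chinese remainder isomorphism `K_F ≃ ∏ K_{F_i}` carries `I_F` onto `∏ u_i I_{F_i}` with
units `u_i`. The units cancel in multiplier rings, so `R_F` corresponds to `∏ R_{F_i}`; integral
closures decompose in the same way, hence maximality can be tested on the factors.

If `R_{F_i}` is maximal, it lies in `R[θ]` when `F_i` is monic and in `R[θ⁻¹]` when `F_i` reduces to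
a multiple of a power of `z`. The generator satisfies a monic equation whose reduction divides a
power of an irreducible polynomial, so `R[θ^{±1}]` is local and has no nontrivial idempotents. A
proper factorization of the separable form `F_i` over the fraction field would produce a nontrivial
idempotent of `K_{F_i}`, and idempotents are integral.
-/

/-! ### Idempotents, integrality and coprimality -/

section CommutativeAlgebra

theorem eq_zero_or_eq_one_of_isIdempotentElem {A : Type*} [CommRing A] [IsLocalRing A] {e : A}
    (he : IsIdempotentElem e) : e = 0 ∨ e = 1 := by
  rcases IsLocalRing.isUnit_or_isUnit_one_sub_self e with hu | hu
  · exact .inr ((IsIdempotentElem.iff_eq_one_of_isUnit hu).1 he)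
  · exact .inl (sub_eq_self.1 ((IsIdempotentElem.iff_eq_one_of_isUnit hu).1 he.one_sub))

theorem irreducible_of_forall_isIdempotentElem {k : Type*} [Field k] {P : k[X]}
    (hP : Squarefree P) (hunit : ¬IsUnit P)
    (hidem : ∀ e : AdjoinRoot P, IsIdempotentElem e → e = 0 ∨ e = 1) : Irreducible P := by
  refine ⟨hunit, fun A B hAB => ?_⟩
  obtain ⟨a, b, hab⟩ : IsCoprime A B := (IsRelPrime.of_squarefree_mul (hAB ▸ hP)).isCoprime
  have hAP : A ∣ P := ⟨B, hAB⟩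
  have hBP : B ∣ P := ⟨A, hAB.trans (mul_comm A B)⟩
  have hidem_aA : IsIdempotentElem (AdjoinRoot.mk P (a * A)) := by
    rw [IsIdempotentElem, ← map_mul, AdjoinRoot.mk_eq_mk]
    exact ⟨-(a * b), by linear_combination (a * A) * hab + a * b * hAB⟩
  rcases hidem _ hidem_aA with h | h
  · have hB : B ∣ a * A := hBP.trans (AdjoinRoot.mk_eq_zero.1 h)
    exact .inr (isUnit_of_dvd_one (hab ▸ dvd_add hB (dvd_mul_left B b)))
  · have hA : A ∣ a * A - 1 := hAP.trans (AdjoinRoot.mk_eq_mk.1 (h.trans (map_one _).symm))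
    exact .inl (isUnit_of_dvd_one ((dvd_sub_right (dvd_mul_left A a)).1 hA))

/-- Reduction modulo the maximal ideal turns maximal ideals of `A` into maximal ideals of `k[X]`
containing `Q`, and `(Q)` is the only one. -/
theorem isLocalRing_of_surjective_of_dvd_pow {R k A : Type*} [CommRing R] [IsLocalRing R] [Field k]
    [CommRing A] [Nontrivial A] [Algebra R A] {π : R →+* k} (hπ : Function.Surjective π)
    {φ : R[X] →ₐ[R] A} (hφ : Function.Surjective φ) {g : R[X]} (hg : g.Monic) (hφg : φ g = 0)
    {Q : k[X]} (hQ : Irreducible Q) {e : ℕ} (hdvd : g.map π ∣ Q ^ e) : IsLocalRing A := by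
  have hφX : ∀ h, aeval (φ X) h = φ h := fun h => by rw [aeval_algHom_apply, aeval_X_left_apply]
  have hint : IsIntegral R (φ X) := ⟨g, hg, (hφX g).trans hφg⟩
  have : Algebra.IsIntegral R A := ⟨fun a => by
    obtain ⟨h, rfl⟩ := hφ a
    exact hφX h ▸
      IsIntegral.of_mem_of_fg _ hint.fg_adjoin_singleton _ (aeval_mem_adjoin_singleton R (φ X))⟩
  have hcomap : ∀ M : Ideal A, M.IsMaximal →
      M.comap φ = (Ideal.span {Q}).comap (mapRingHom π) := by
    intro M hM
    set J : Ideal R[X] := M.comap φ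
    have hJ : J.IsMaximal := Ideal.comap_isMaximal_of_surjective _ hφ
    have hker : RingHom.ker (mapRingHom π) ≤ J := by
      rw [ker_mapRingHom, IsLocalRing.ker_eq_maximalIdeal π hπ, Ideal.map_le_iff_le_comap,
        ← IsLocalRing.eq_maximalIdeal (Ideal.isMaximal_comap_of_isIntegral_of_isMaximal (R := R) M)]
      intro r hr
      rw [Ideal.mem_comap, Ideal.mem_comap, ← algebraMap_eq, φ.commutes]
      exact hr
    have hcomap_map : (J.map (mapRingHom π)).comap (mapRingHom π) = J := by
      rw [Ideal.comap_map_of_surjective' _ (map_surjective π hπ), sup_eq_left.2 hker]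
    have hmap : (J.map (mapRingHom π)).IsMaximal :=
      (Ideal.map_eq_top_or_isMaximal_of_surjective _ (map_surjective π hπ) hJ).resolve_left
        fun h => hJ.ne_top (by rw [← hcomap_map, h, Ideal.comap_top])
    have hQmem : Q ∈ J.map (mapRingHom π) := by
      refine hmap.isPrime.mem_of_pow_mem e (Ideal.mem_of_dvd _ hdvd ?_)
      exact Ideal.mem_map_of_mem (mapRingHom π) (show g ∈ J by simp [J, hφg])
    rw [← hcomap_map, ← (PrincipalIdealRing.isMaximal_of_irreducible hQ).eq_of_le hmap.ne_top
      (by simpa [Ideal.span_le] using hQmem)]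
  obtain ⟨M, hM⟩ := Ideal.exists_maximal A
  exact .of_unique_max_ideal ⟨M, hM, fun N hN =>
    Ideal.comap_injective_of_surjective _ hφ ((hcomap N hN).trans (hcomap M hM).symm)⟩

theorem isIntegral_pi_iff {R ι : Type*} [CommRing R] [Finite ι] {A : ι → Type*}
    [∀ i, CommRing (A i)] [∀ i, Algebra R (A i)] {x : ∀ i, A i} :
    IsIntegral R x ↔ ∀ i, IsIntegral R (x i) := by
  refine ⟨fun hx i => hx.map (Pi.evalAlgHom R A i), fun hx => ?_⟩
  have := Fintype.ofFinite ι
  choose q hq hqx using hx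
  refine ⟨∏ i, q i, monic_prod_of_monic _ _ fun i _ => hq i, funext fun i => ?_⟩
  have hqi : aeval (x i) (q i) = 0 := hqx i
  have hi : Pi.evalAlgHom R A i (aeval x (∏ j, q j)) = 0 := by
    rw [← aeval_algHom_apply, map_prod]
    exact Finset.prod_eq_zero (Finset.mem_univ i) hqi
  exact hi

theorem isCoprime_of_isCoprime_map {R S : Type*} [CommRing R] [CommRing S] [Nontrivial S]
    {φ : R →+* S} [IsLocalHom φ] {f g : R[X]} (hf : f.Monic) (h : IsCoprime (f.map φ) (g.map φ)) :
    IsCoprime f g := by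
  obtain ⟨l, hl⟩ := Nat.exists_eq_add_of_le (natDegree_map_le (f := φ) (p := g))
  rw [← isUnit_resultant_iff_isCoprime (hf.map φ)] at h
  rw [← isUnit_resultant_iff_isCoprime hf, ← isUnit_map_iff φ, ← resultant_map_map, hl,
    resultant_add_right_deg _ _ _ _ _ le_rfl, ← hf.natDegree_map φ, (hf.map φ).coeff_natDegree,
    one_pow, one_mul]
  exact h

theorem contentIdeal_eq_top_of_map_ne_zero {R k : Type*} [CommRing R] [IsLocalRing R] [Field k]
    {π : R →+* k} (hπ : Function.Surjective π) {f : R[X]} (hf : f.map π ≠ 0) :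
    f.contentIdeal = ⊤ := by
  by_contra htop
  refine hf (Polynomial.ext fun i => ?_)
  rw [coeff_map, coeff_zero, ← RingHom.mem_ker, IsLocalRing.ker_eq_maximalIdeal π hπ]
  exact IsLocalRing.le_maximalIdeal htop (coeff_mem_contentIdeal f i)

section ChineseRemainder

variable {k ι R : Type*} [Field k] [CommRing R] [Algebra R k] [Fintype ι] {f : ι → k[X]} {P : k[X]}

theorem pi_algHomOfDvd_bijective (hf : Pairwise (Function.onFun IsCoprime f))
    (hP : P = ∏ i, f i) (hdvd : ∀ i, f i ∣ P) :
    Function.Bijective (AlgHom.pi fun i => AdjoinRoot.algHomOfDvd R P (f i) (hdvd i)) := by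
  have hmk : ∀ (g : k[X]) (i : ι),
      AdjoinRoot.algHomOfDvd R P (f i) (hdvd i) (AdjoinRoot.mk P g) = AdjoinRoot.mk (f i) g :=
    fun g _ => AdjoinRoot.aeval_eq g
  refine ⟨(injective_iff_map_eq_zero _).2 fun x hx => ?_, fun y => ?_⟩
  · obtain ⟨g, rfl⟩ := AdjoinRoot.mk_surjective x
    rw [AdjoinRoot.mk_eq_zero, hP]
    exact Fintype.prod_dvd_of_coprime hf fun i =>
      AdjoinRoot.mk_eq_zero.1 ((hmk g i).symm.trans (congrFun hx i))
  · choose g hg using fun i => AdjoinRoot.mk_surjective (y i)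
    obtain ⟨h, hh⟩ := Ideal.exists_forall_sub_mem_ideal
      (I := fun i => Ideal.span {f i}) (fun i j hij => Ideal.isCoprime_span_singleton_iff _ _ |>.2
        (hf hij)) g
    refine ⟨AdjoinRoot.mk P h, funext fun i => ?_⟩
    rw [AlgHom.pi_apply, hmk, ← hg, AdjoinRoot.mk_eq_mk, ← Ideal.mem_span_singleton]
    exact hh i

variable (R) in
/-- The Chinese remainder isomorphism for a product of pairwise coprime polynomials over a field,
as an isomorphism of algebras over a subring `R` of that field. -/
def adjoinRootEquivPi (hf : Pairwise (Function.onFun IsCoprime f)) (hP : P = ∏ i, f i) :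
    AdjoinRoot P ≃ₐ[R] ∀ i, AdjoinRoot (f i) :=
  AlgEquiv.ofBijective _ (pi_algHomOfDvd_bijective (R := R) hf hP
    fun i => hP ▸ Finset.dvd_prod_of_mem f (Finset.mem_univ i))

theorem adjoinRootEquivPi_root (hf : Pairwise (Function.onFun IsCoprime f))
    (hP : P = ∏ i, f i) (i : ι) :
    adjoinRootEquivPi R hf hP (AdjoinRoot.root P) i = AdjoinRoot.root (f i) :=
  AdjoinRoot.algHomOfDvd_root P (f i) (hP ▸ Finset.dvd_prod_of_mem f (Finset.mem_univ i))

end ChineseRemainder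

end CommutativeAlgebra

section PartialFractions

variable {S ι : Type*} [CommRing S] {f : ι → S[X]} {d : ι → ℕ}

theorem natDegree_prod_le_sum_of_natDegree_le {s : Finset ι} (hf : ∀ i, (f i).natDegree ≤ d i) :
    (∏ i ∈ s, f i).natDegree ≤ ∑ i ∈ s, d i :=
  (natDegree_prod_le s f).trans (Finset.sum_le_sum fun i _ => hf i)

theorem mul_mem_degreeLT {u v : S[X]} {a b : ℕ} (hu : u ∈ degreeLT S a) (hv : v.natDegree ≤ b) :
    u * v ∈ degreeLT S (a + b) := by
  rw [mem_degreeLT] at hu ⊢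
  calc (u * v).degree ≤ u.degree + v.degree := degree_mul_le u v
    _ ≤ u.degree + b := by gcongr; exact natDegree_le_iff_degree_le.1 hv
    _ < a + b := WithBot.add_lt_add_right (by simp) hu
    _ = ((a + b : ℕ) : WithBot ℕ) := by norm_cast

variable [Fintype ι]

theorem sum_mul_prod_erase_mem_degreeLT (hf : ∀ i, (f i).natDegree ≤ d i) {u : ι → S[X]}
    (hu : ∀ i, u i ∈ degreeLT S (d i)) :
    ∑ i, u i * ∏ j ∈ Finset.univ.erase i, f j ∈ degreeLT S (∑ i, d i) := by
  refine Submodule.sum_mem _ fun i hi => ?_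
  rw [← Finset.add_sum_erase _ d hi]
  exact mul_mem_degreeLT (hu i) (natDegree_prod_le_sum_of_natDegree_le hf)

theorem mem_degreeLT_of_mul_monic_mem {u v : S[X]} {a b : ℕ} (hv : v.Monic)
    (hvb : v.natDegree = b) (huv : u * v ∈ degreeLT S (a + b)) : u ∈ degreeLT S a := by
  nontriviality S
  rw [mem_degreeLT, hv.degree_mul, degree_eq_natDegree hv.ne_zero, hvb, Nat.cast_add] at huv
  exact mem_degreeLT.2 ((WithBot.add_lt_add_iff_right (by simp)).1 huv)

theorem exists_eq_sum_mul_prod_erase_of_ne [Nontrivial S] {i₀ : ι}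
    (hmonic : ∀ i ≠ i₀, (f i).Monic) (hcop : Pairwise (Function.onFun IsCoprime f)) (w : S[X]) :
    ∃ u : ι → S[X], (∀ i ≠ i₀, (u i).degree < (f i).degree) ∧
      w = ∑ i, u i * ∏ j ∈ Finset.univ.erase i, f j := by
  set s := Finset.univ.erase i₀
  have hs : ∀ i ∈ s, i ≠ i₀ := fun i hi => Finset.ne_of_mem_erase hi
  obtain ⟨a, b, hab⟩ : IsCoprime (f i₀) (∏ i ∈ s, f i) :=
    IsCoprime.prod_right fun i hi => hcop (hs i hi).symm
  obtain ⟨q, r, hr, hwa⟩ := eq_quo_mul_prod_add_sum_rem_mul_prod (w * a)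
    (fun i hi => hmonic i (hs i hi)) (fun i _ j _ hij => hcop hij)
  have hprod : ∀ i ∈ s, f i₀ * ∏ j ∈ s.erase i, f j = ∏ j ∈ Finset.univ.erase i, f j := by
    intro i hi
    rw [Finset.erase_right_comm, Finset.mul_prod_erase]
    exact Finset.mem_erase.2 ⟨(hs i hi).symm, Finset.mem_univ i₀⟩
  have hsum : ∑ i ∈ s, r i * ∏ j ∈ Finset.univ.erase i, f j
      = f i₀ * ∑ i ∈ s, r i * ∏ j ∈ s.erase i, f j := by
    rw [Finset.mul_sum]
    exact Finset.sum_congr rfl fun i hi => by rw [← hprod i hi]; ring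
  refine ⟨Function.update r i₀ (w * b + q * f i₀), fun i hi => ?_, ?_⟩
  · rw [Function.update_of_ne hi]
    exact hr i (Finset.mem_erase.2 ⟨hi, Finset.mem_univ i⟩)
  · rw [← Finset.add_sum_erase _ _ (Finset.mem_univ i₀), Function.update_self,
      Finset.sum_congr rfl fun i hi => by rw [Function.update_of_ne (hs i hi)], hsum]
    linear_combination (-w) * hab + f i₀ * hwa

/-- Only `f i₀` may fail to be monic; the bound on `u i₀` is forced by the bounds on all the other
terms, because the cofactor of `u i₀` is monic. -/
theorem exists_eq_sum_mul_prod_erase {i₀ : ι} (hd₀ : (f i₀).natDegree ≤ d i₀)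
    (hmonic : ∀ i ≠ i₀, (f i).Monic) (hd : ∀ i ≠ i₀, (f i).natDegree = d i)
    (hcop : Pairwise (Function.onFun IsCoprime f)) {w : S[X]} (hw : w ∈ degreeLT S (∑ i, d i)) :
    ∃ u : ι → S[X], (∀ i, u i ∈ degreeLT S (d i)) ∧
      w = ∑ i, u i * ∏ j ∈ Finset.univ.erase i, f j := by
  nontriviality S
  have hf : ∀ i, (f i).natDegree ≤ d i := fun i => by
    obtain rfl | hi := eq_or_ne i i₀
    exacts [hd₀, (hd i hi).le]
  set s := Finset.univ.erase i₀
  have hs : ∀ i ∈ s, i ≠ i₀ := fun i hi => Finset.ne_of_mem_erase hi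
  obtain ⟨u, hur, hwu⟩ := exists_eq_sum_mul_prod_erase_of_ne hmonic hcop w
  have hu : ∀ i ≠ i₀, u i ∈ degreeLT S (d i) := fun i hi => mem_degreeLT.2 <| by
    rw [← hd i hi, ← degree_eq_natDegree (hmonic i hi).ne_zero]
    exact hur i hi
  have hu₀ : u i₀ * ∏ j ∈ s, f j = w - ∑ j ∈ s, u j * ∏ l ∈ Finset.univ.erase j, f l := by
    rw [hwu]
    exact eq_sub_of_add_eq (Finset.add_sum_erase _ _ (Finset.mem_univ i₀))
  have hu₀_mem : u i₀ * ∏ j ∈ s, f j ∈ degreeLT S (d i₀ + ∑ j ∈ s, d j) := by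
    rw [Finset.add_sum_erase _ d (Finset.mem_univ i₀), hu₀]
    refine Submodule.sub_mem _ hw (Submodule.sum_mem _ fun j hj => ?_)
    rw [← Finset.add_sum_erase _ d (Finset.mem_univ j)]
    exact mul_mem_degreeLT (hu j (hs j hj)) (natDegree_prod_le_sum_of_natDegree_le hf)
  refine ⟨u, fun i => ?_, hwu⟩
  obtain rfl | hi := eq_or_ne i i₀
  · refine mem_degreeLT_of_mul_monic_mem
      (monic_prod_of_monic _ _ fun j hj => hmonic j (hs j hj)) ?_ hu₀_mem
    rw [natDegree_prod_of_monic _ _ fun j hj => hmonic j (hs j hj)]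
    exact Finset.sum_congr rfl fun j hj => hd j (hs j hj)
  · exact hu i hi

end PartialFractions

/-! ### Dehomogenized binary forms -/

section BinaryForm

theorem exists_eq_C_mul_of_map_dvd_map {R K : Type*} [CommRing R] [Field K] [Algebra R K]
    [FaithfulSMul R K] {f v : R[X]} (hf : f.contentIdeal = ⊤) (hdeg : v.natDegree ≤ f.natDegree)
    (hdvd : f.map (algebraMap R K) ∣ v.map (algebraMap R K)) : ∃ r : R, v = C r * f := by
  have hinj : Function.Injective (algebraMap R K) := FaithfulSMul.algebraMap_injective R K
  have : Nontrivial R := (algebraMap R K).domain_nontrivial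
  obtain ⟨w, hw⟩ := hdvd
  obtain ⟨q, rfl⟩ : ∃ q : K, w = C q := by
    obtain rfl | hw₀ := eq_or_ne w 0
    · exact ⟨0, C_0.symm⟩
    refine ⟨_, eq_C_of_natDegree_eq_zero ?_⟩
    have hf₀ : f.map (algebraMap R K) ≠ 0 := by
      rw [Polynomial.map_ne_zero_iff hinj]
      rintro rfl
      exact bot_ne_top (contentIdeal_zero.symm.trans hf)
    have hsum := congrArg natDegree hw
    rw [natDegree_mul hf₀ hw₀, natDegree_map_eq_of_injective hinj,
      natDegree_map_eq_of_injective hinj] at hsum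
    omega
  have hcoeff : ∀ i, algebraMap R K (v.coeff i) = f.coeff i • q := fun i => by
    rw [← coeff_map, hw, coeff_mul_C, coeff_map, Algebra.smul_def]
  have hcontent : f.contentIdeal ≤
      (LinearMap.range (Algebra.linearMap R K)).comap (LinearMap.toSpanSingleton R K q) := by
    rw [contentIdeal_def, Ideal.span_le]
    rintro _ ha
    obtain ⟨i, -, rfl⟩ := mem_coeffs_iff.1 ha
    exact ⟨v.coeff i, hcoeff i⟩
  obtain ⟨r, hr⟩ : ∃ r, algebraMap R K r = (1 : R) • q :=
    hcontent (hf ▸ Submodule.mem_top)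
  refine ⟨r, map_injective _ hinj ?_⟩
  rw [hw, Polynomial.map_mul, map_C, hr, one_smul, mul_comm]

variable {S T : Type} [CommRing S] [CommRing T] {n : ℕ} {c : ℕ → S}

theorem map_binPolyR (φ : S →+* T) (n : ℕ) (c : ℕ → S) :
    (binPolyR S n c).map φ = binPolyR T n fun i => φ (c i) := by
  simp [binPolyR, Polynomial.map_sum]

theorem binPoly_eq_map (R K : Type) [CommRing R] [Field K] [Algebra R K] (n : ℕ) (c : ℕ → R) :
    binPoly R K n c = (binPolyR R n c).map (algebraMap R K) :=
  (map_binPolyR ..).symm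

theorem binPolyR_zero (c : ℕ → S) : binPolyR S 0 c = C (c 0) := by
  simp [binPolyR]

theorem binPolyR_succ (n : ℕ) (c : ℕ → S) :
    binPolyR S (n + 1) c = X * binPolyR S n c + C (c (n + 1)) := by
  rw [binPolyR, Finset.sum_range_succ, binPolyR, Finset.mul_sum, Nat.sub_self, pow_zero, mul_one]
  congr 1
  refine Finset.sum_congr rfl fun i hi => ?_
  rw [Nat.succ_sub (Finset.mem_range_succ_iff.1 hi), pow_succ]
  ring

theorem natDegree_binPolyR_le (n : ℕ) (c : ℕ → S) : (binPolyR S n c).natDegree ≤ n :=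
  natDegree_sum_le_of_forall_le _ _ fun i _ =>
    (natDegree_C_mul_X_pow_le _ _).trans (Nat.sub_le n i)

theorem coeff_binPolyR {i : ℕ} (hi : i ≤ n) : (binPolyR S n c).coeff (n - i) = c i := by
  rw [binPolyR, finsetSum_coeff, Finset.sum_eq_single i]
  · simp
  · intro j hj hji
    have := Finset.mem_range_succ_iff.1 hj
    rw [coeff_C_mul, coeff_X_pow, if_neg (by omega), mul_zero]
  · exact fun h => absurd (Finset.mem_range_succ_iff.2 hi) h

theorem coeff_binPolyR_self : (binPolyR S n c).coeff n = c 0 := coeff_binPolyR (Nat.zero_le n)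

theorem natDegree_binPolyR (hc : c 0 ≠ 0) : (binPolyR S n c).natDegree = n :=
  natDegree_eq_of_le_of_coeff_ne_zero (natDegree_binPolyR_le n c) (coeff_binPolyR_self.trans_ne hc)

theorem monic_binPolyR (hc : c 0 = 1) : (binPolyR S n c).Monic :=
  monic_of_natDegree_le_of_coeff_eq_one n (natDegree_binPolyR_le n c)
    (coeff_binPolyR_self.trans hc)

theorem binPolyR_eq_C_mul_X_pow {i : ℕ} (hi : i ≤ n) (h : ∀ j ≤ n, j ≠ i → c j = 0) :
    binPolyR S n c = C (c i) * X ^ (n - i) :=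
  Finset.sum_eq_single_of_mem i (Finset.mem_range_succ_iff.2 hi) fun j hj hji => by
    rw [h j (Finset.mem_range_succ_iff.1 hj) hji, C_0, zero_mul]

end BinaryForm

/-! ### The ring of a binary form as a multiplier ring -/

section MultiplierRing

variable {R K} {n : ℕ} {c : ℕ → R}

theorem aeval_θF (u : R[X]) :
    aeval (θF R K n c) u = AdjoinRoot.mk (binPoly R K n c) (u.map (algebraMap R K)) := by
  rw [← aeval_map_algebraMap K, θF, AdjoinRoot.aeval_eq]

theorem aeval_θF_binPolyR : aeval (θF R K n c) (binPolyR R n c) = 0 := by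
  rw [aeval_θF, ← binPoly_eq_map, AdjoinRoot.mk_self]

theorem ζF_add_algebraMap (i : ℕ) :
    ζF R K n c i + algebraMap R (KF R K n c) (c i) = aeval (θF R K n c) (binPolyR R i c) := by
  simp [ζF, binPolyR, Finset.sum_range_succ]

theorem ζF_zero : ζF R K n c 0 = 0 := by
  simp [ζF]

theorem ζF_succ (i : ℕ) :
    ζF R K n c (i + 1) = θF R K n c * aeval (θF R K n c) (binPolyR R i c) := by
  have h := ζF_add_algebraMap (K := K) (n := n) (c := c) (i + 1)
  rw [binPolyR_succ, map_add, map_mul, aeval_X, aeval_C] at h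
  exact add_right_cancel h

theorem ζF_self : ζF R K n c n = -algebraMap R (KF R K n c) (c n) :=
  eq_neg_of_add_eq_zero_left ((ζF_add_algebraMap n).trans aeval_θF_binPolyR)

variable (R K n c) in
/-- The lattice in `K_F` spanned over `R` by `1, θ, …, θ^(n-1)`, encoded as the set of values at `θ`
of the polynomials of degree less than `n`. For `1 ≤ n` it is the fractional ideal `I_F^(n-1)`. -/
def powerLattice : Submodule R (KF R K n c) :=
  (degreeLT R n).map (aeval (θF R K n c)).toLinearMap

theorem aeval_mem_powerLattice {u : R[X]} (hu : u ∈ degreeLT R n) :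
    aeval (θF R K n c) u ∈ powerLattice R K n c :=
  Submodule.mem_map_of_mem hu

theorem pow_mem_powerLattice {j : ℕ} (hj : j < n) : θF R K n c ^ j ∈ powerLattice R K n c := by
  rw [← aeval_X (R := R) (θF R K n c), ← map_pow]
  exact aeval_mem_powerLattice
    (mem_degreeLT.2 ((degree_X_pow_le j).trans_lt (by exact_mod_cast hj)))

theorem mem_powerLattice_div_iff {x : KF R K n c} :
    x ∈ powerLattice R K n c / powerLattice R K n c ↔
      ∀ j < n, x * θF R K n c ^ j ∈ powerLattice R K n c := by
  rw [Submodule.mem_div_iff_forall_mul_mem]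
  refine ⟨fun h j hj => h _ (pow_mem_powerLattice hj), fun h y hy => ?_⟩
  obtain ⟨u, hu, rfl⟩ := hy
  rw [degreeLT_eq_span_X_pow] at hu
  refine Submodule.span_induction (p := fun u _ => x * aeval (θF R K n c) u ∈ _)
    ?_ (by simp) (fun u v _ _ hu hv => ?_) (fun a u _ hu => ?_) hu
  · intro _ hu
    obtain ⟨j, hj, rfl⟩ := Finset.mem_image.1 (Finset.mem_coe.1 hu)
    simpa using h j (Finset.mem_range.1 hj)
  · rw [map_add, mul_add]
    exact add_mem hu hv
  · rw [map_smul, mul_smul_comm]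
    exact Submodule.smul_mem _ a hu

theorem aeval_binPolyR_mul_pow_mem_powerLattice {i j : ℕ} (hi : i ≤ n) (hj : j < n) :
    aeval (θF R K n c) (binPolyR R i c) * θF R K n c ^ j ∈ powerLattice R K n c := by
  induction hi using Nat.decreasingInduction generalizing j with
  | self => simp [aeval_θF_binPolyR]
  | of_succ i hi ih =>
    cases j with
    | zero =>
      have hdeg := natDegree_le_iff_degree_le.1 (natDegree_binPolyR_le i c)
      rw [pow_zero, mul_one]
      exact aeval_mem_powerLattice (mem_degreeLT.2 (hdeg.trans_lt (by exact_mod_cast hi)))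
    | succ j =>
      have hj' : j < n := (Nat.lt_succ_self j).trans hj
      have hshift : aeval (θF R K n c) (binPolyR R i c) * θF R K n c ^ (j + 1) =
          aeval (θF R K n c) (binPolyR R (i + 1) c) * θF R K n c ^ j -
            c (i + 1) • θF R K n c ^ j := by
        rw [binPolyR_succ, map_add, map_mul, aeval_X, aeval_C, Algebra.smul_def]
        ring
      rw [hshift]
      exact sub_mem (ih hj') (Submodule.smul_mem _ _ (pow_mem_powerLattice hj'))

theorem ζF_mem_powerLattice_div {i : ℕ} (hi : i ≤ n) :
    ζF R K n c i ∈ powerLattice R K n c / powerLattice R K n c :=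
  mem_powerLattice_div_iff.2 fun j hj => by
    rw [eq_sub_of_add_eq (ζF_add_algebraMap i), sub_mul, ← Algebra.smul_def]
    exact sub_mem (aeval_binPolyR_mul_pow_mem_powerLattice hi hj)
      (Submodule.smul_mem _ _ (pow_mem_powerLattice hj))

theorem RFmod_le_powerLattice_div :
    RFmod R K n c ≤ powerLattice R K n c / powerLattice R K n c := by
  refine Submodule.span_le.2 (Set.union_subset ?_ ?_)
  · simp
  · rintro _ ⟨i, -, hi, rfl⟩
    exact ζF_mem_powerLattice_div (hi.trans (Nat.sub_le n 1))

theorem one_mem_RFmod : 1 ∈ RFmod R K n c :=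
  Submodule.subset_span (.inl rfl)

theorem ζF_mem_RFmod {i : ℕ} (hi₀ : 1 ≤ i) (hi : i ≤ n - 1) : ζF R K n c i ∈ RFmod R K n c :=
  Submodule.subset_span (.inr ⟨i, hi₀, hi, rfl⟩)

theorem RFmod_le_toSubmodule {A : Subalgebra R (KF R K n c)}
    (hA : ∀ i, 1 ≤ i → i ≤ n - 1 → ζF R K n c i ∈ A) :
    RFmod R K n c ≤ Subalgebra.toSubmodule A :=
  Submodule.span_le.2 (Set.union_subset (Set.singleton_subset_iff.2 A.one_mem)
    fun _ ⟨i, hi₀, hi, h⟩ => h ▸ hA i hi₀ hi)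

variable [FaithfulSMul R K]

theorem natDegree_binPoly (hc : c 0 ≠ 0) : (binPoly R K n c).natDegree = n := by
  rw [binPoly_eq_map, natDegree_map_eq_of_injective (FaithfulSMul.algebraMap_injective R K),
    natDegree_binPolyR hc]

theorem leadingCoeff_dvd_coeff_of_aeval_mul_pow_mem (hc : c 0 ≠ 0)
    (hprim : (binPolyR R n c).contentIdeal = ⊤) {k : ℕ} (hk : k ≤ n) {u : R[X]}
    (hu : u.natDegree ≤ k)
    (hmem : aeval (θF R K n c) u * θF R K n c ^ (n - k) ∈ powerLattice R K n c) :
    c 0 ∣ u.coeff k := by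
  obtain ⟨w, hw, hwu⟩ := hmem
  have hw_deg : w.degree < n := mem_degreeLT.1 hw
  set v : R[X] := u * X ^ (n - k) - w
  have hv_deg : v.natDegree ≤ (binPolyR R n c).natDegree := by
    rw [natDegree_binPolyR hc]
    refine (natDegree_sub_le _ _).trans (max_le ?_ (natDegree_le_of_degree_le hw_deg.le))
    have := natDegree_X_pow_le (R := R) (n - k)
    exact natDegree_mul_le.trans (by omega)
  have hv_root : aeval (θF R K n c) v = 0 := by
    rw [map_sub, map_mul, map_pow, aeval_X, sub_eq_zero]
    exact hwu.symm
  rw [aeval_θF, AdjoinRoot.mk_eq_zero, binPoly_eq_map] at hv_root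
  obtain ⟨q, hq⟩ := exists_eq_C_mul_of_map_dvd_map hprim hv_deg hv_root
  have hcoeff : (u * X ^ (n - k)).coeff n = u.coeff k := by
    simpa only [Nat.add_sub_of_le hk] using coeff_mul_X_pow u (n - k) k
  refine ⟨q, ?_⟩
  rw [mul_comm, ← coeff_binPolyR_self (n := n) (c := c), ← coeff_C_mul, ← hq, coeff_sub, hcoeff,
    coeff_eq_zero_of_degree_lt hw_deg, sub_zero]

theorem aeval_mem_RFmod_of_mem_powerLattice_div (hc : c 0 ≠ 0)
    (hprim : (binPolyR R n c).contentIdeal = ⊤) {k : ℕ} (hk : k < n) {u : R[X]}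
    (hu : u.natDegree ≤ k)
    (hmem : aeval (θF R K n c) u ∈ powerLattice R K n c / powerLattice R K n c) :
    aeval (θF R K n c) u ∈ RFmod R K n c := by
  induction k generalizing u with
  | zero =>
    rw [eq_C_of_natDegree_le_zero hu, aeval_C, Algebra.algebraMap_eq_smul_one]
    exact Submodule.smul_mem _ _ one_mem_RFmod
  | succ k ih =>
    obtain ⟨q, hq⟩ := leadingCoeff_dvd_coeff_of_aeval_mul_pow_mem hc hprim hk.le hu
      (mem_powerLattice_div_iff.1 hmem _ (Nat.sub_lt (Nat.zero_lt_of_lt hk) k.succ_pos))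
    set v : R[X] := u - C q * (X * binPolyR R k c)
    have hv : v.natDegree ≤ k := by
      refine natDegree_le_iff_coeff_eq_zero.2 fun l hl => ?_
      obtain ⟨l, rfl⟩ : ∃ m, l = m + 1 := Nat.exists_eq_add_one.2 (by omega)
      rw [coeff_sub, coeff_C_mul, coeff_X_mul]
      obtain rfl | hlk := eq_or_ne l k
      · rw [hq, coeff_binPolyR_self, mul_comm, sub_self]
      · rw [coeff_eq_zero_of_natDegree_lt (by omega), coeff_eq_zero_of_natDegree_lt
          ((natDegree_binPolyR_le k c).trans_lt (by omega)), mul_zero, sub_zero]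
    have hζ : aeval (θF R K n c) v = aeval (θF R K n c) u - q • ζF R K n c (k + 1) := by
      rw [map_sub, map_mul, map_mul, aeval_C, aeval_X, ζF_succ, Algebra.smul_def]
    have hv_mem := ih (by omega) hv
      (hζ ▸ sub_mem hmem (Submodule.smul_mem _ q (ζF_mem_powerLattice_div hk.le)))
    rw [eq_add_of_sub_eq hζ.symm]
    exact add_mem hv_mem (Submodule.smul_mem _ q (ζF_mem_RFmod (by omega) (by omega)))

theorem subsingleton_KF_zero (hc : c 0 ≠ 0) : Subsingleton (KF R K 0 c) := by
  have hunit : IsUnit (binPoly R K 0 c) := by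
    rw [binPoly_eq_map, binPolyR_zero, map_C, isUnit_C, isUnit_iff_ne_zero]
    exact (FaithfulSMul.algebraMap_eq_zero_iff R K).not.2 hc
  exact subsingleton_of_zero_eq_one (AdjoinRoot.mk_eq_zero.2 hunit.dvd).symm

theorem RFmod_eq_powerLattice_div (hc : c 0 ≠ 0) (hprim : (binPolyR R n c).contentIdeal = ⊤) :
    RFmod R K n c = powerLattice R K n c / powerLattice R K n c := by
  refine RFmod_le_powerLattice_div.antisymm fun x hx => ?_
  obtain rfl | hn := Nat.eq_zero_or_pos n
  · have := subsingleton_KF_zero (K := K) hc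
    exact Subsingleton.elim 0 x ▸ zero_mem _
  obtain ⟨u, hu, rfl⟩ : x ∈ powerLattice R K n c := by
    simpa using mem_powerLattice_div_iff.1 hx 0 hn
  exact aeval_mem_RFmod_of_mem_powerLattice_div hc hprim (Nat.sub_lt hn one_pos)
    (natDegree_le_iff_coeff_eq_zero.2 fun l hl =>
      (degree_lt_iff_coeff_zero u n).1 (mem_degreeLT.1 hu) l (Nat.le_of_pred_lt hl)) hx

theorem toSubmodule_RFalg (hc : c 0 ≠ 0) (hprim : (binPolyR R n c).contentIdeal = ⊤) :
    Subalgebra.toSubmodule (RFalg R K n c) = RFmod R K n c := by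
  have hmul : ∀ x y, x ∈ RFmod R K n c → y ∈ RFmod R K n c → x * y ∈ RFmod R K n c := by
    rw [RFmod_eq_powerLattice_div hc hprim]
    simp only [Submodule.mem_div_iff_forall_mul_mem, mul_assoc]
    exact fun x y hx hy z hz => hx _ (hy z hz)
  have hle : RFalg R K n c ≤ (RFmod R K n c).toSubalgebra one_mem_RFmod hmul :=
    Algebra.adjoin_le fun _ ⟨i, hi₀, hi, h⟩ => h ▸ ζF_mem_RFmod hi₀ hi
  exact le_antisymm (fun _ hx => hle hx)
    (RFmod_le_toSubmodule fun i hi₀ hi => Algebra.subset_adjoin ⟨i, hi₀, hi, rfl⟩)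

end MultiplierRing

/-! ### Decomposition along a coprime factorization -/

section Pi

variable {R ι : Type*} [CommRing R] {A : Type*} {B : ι → Type*} [CommRing A] [Algebra R A]
  [∀ i, CommRing (B i)] [∀ i, Algebra R (B i)] (E : A ≃ₐ[R] ∀ i, B i)

include E

theorem submodule_eq_iff_forall_eq_of_mem_iff {M N : Submodule R A} {M' N' : ∀ i, Submodule R (B i)}
    (hM : ∀ x, x ∈ M ↔ ∀ i, E x i ∈ M' i) (hN : ∀ x, x ∈ N ↔ ∀ i, E x i ∈ N' i) :
    M = N ↔ ∀ i, M' i = N' i := by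
  refine ⟨fun h i => ?_, fun h => Submodule.ext fun x => ?_⟩
  · have hsingle : ∀ (P : ∀ i, Submodule R (B i)) (y : B i),
        (∀ j, E (E.symm (Pi.single i y)) j ∈ P j) ↔ y ∈ P i := fun P y => by
      rw [E.apply_symm_apply]
      refine ⟨fun hy => by simpa using hy i, fun hy j => ?_⟩
      obtain rfl | hji := eq_or_ne j i
      · simpa using hy
      · simp [hji]
    ext y
    rw [← hsingle M', ← hM, h, hN, hsingle N']
  · simp only [hM, hN, h]

theorem nonempty_algEquiv_pi_subtype {p : ι → Prop} (hp : ∀ i, ¬p i → Subsingleton (B i))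
    {S : Subalgebra R A} {T : ∀ i, Subalgebra R (B i)} (hS : ∀ x, x ∈ S ↔ ∀ i, E x i ∈ T i) :
    Nonempty (S ≃ₐ[R] ∀ i : {i // p i}, T i) := by
  let φ : S →ₐ[R] ∀ i : {i // p i}, T i := AlgHom.pi fun i =>
    (((Pi.evalAlgHom R B i).comp E.toAlgHom).comp S.val).codRestrict (T i)
      fun x => (hS x).1 x.2 i
  have hφ : ∀ x (i : {i // p i}), (φ x i : B i) = E x i := fun _ _ => rfl
  refine ⟨AlgEquiv.ofBijective φ ⟨fun x y hxy => ?_, fun z => ?_⟩⟩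
  · refine Subtype.ext (E.injective (funext fun i => ?_))
    by_cases hi : p i
    · exact congrArg Subtype.val (congrFun hxy ⟨i, hi⟩)
    · have := hp i hi
      exact Subsingleton.elim _ _
  · let y : ∀ i, T i := fun i => if hi : p i then z ⟨i, hi⟩ else 0
    have hy : ∀ i, E (E.symm fun i => (y i : B i)) i = y i := fun i => by rw [E.apply_symm_apply]
    refine ⟨⟨E.symm fun i => (y i : B i), (hS _).2 fun i => hy i ▸ (y i).2⟩,
      funext fun i => Subtype.ext ?_⟩
    exact (hφ _ i).trans ((hy i).trans (congrArg Subtype.val (dif_pos i.2)))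

end Pi

/-- A factorization `F = ∏ F_i` over `R` into pairwise coprime binary forms, of which only `F_{i₀}`
may fail to be monic. The forms are given by their degrees `d i` and coefficients `cF i`, and
coprimality is that of the dehomogenizations in `R[x]`. -/
structure IsCoprimeFactorization {R : Type} [CommRing R] {ι : Type*} [Fintype ι] (n : ℕ)
    (c : ℕ → R) (d : ι → ℕ) (cF : ι → ℕ → R) (i₀ : ι) : Prop where
  sum_degree : ∑ i, d i = n
  prod_eq : binPolyR R n c = ∏ i, binPolyR R (d i) (cF i)
  leadingCoeff_eq_one : ∀ i ≠ i₀, cF i 0 = 1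
  pairwise_isCoprime : Pairwise (Function.onFun IsCoprime fun i => binPolyR R (d i) (cF i))

namespace IsCoprimeFactorization

variable {R K} {ι : Type*} [Fintype ι] {n : ℕ} {c : ℕ → R} {d : ι → ℕ} {cF : ι → ℕ → R} {i₀ : ι}
  (h : IsCoprimeFactorization n c d cF i₀)

include h

theorem binPolyR_dvd (i : ι) : binPolyR R (d i) (cF i) ∣ binPolyR R n c :=
  h.prod_eq ▸ Finset.dvd_prod_of_mem _ (Finset.mem_univ i)

theorem contentIdeal_eq_top (hprim : (binPolyR R n c).contentIdeal = ⊤) (i : ι) :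
    (binPolyR R (d i) (cF i)).contentIdeal = ⊤ :=
  top_le_iff.1 (hprim ▸ contentIdeal_le_contentIdeal_of_dvd (h.binPolyR_dvd i))

theorem coeff_zero_ne_zero (hc : c 0 ≠ 0) (i : ι) : cF i 0 ≠ 0 := by
  have hF : binPolyR R n c ≠ 0 := fun h₀ =>
    hc (by rw [← coeff_binPolyR_self (n := n) (c := c), h₀, coeff_zero])
  have hdeg : ∑ i, (binPolyR R (d i) (cF i)).natDegree = ∑ i, d i := by
    refine (Finset.sum_le_sum fun i _ => natDegree_binPolyR_le (d i) (cF i)).antisymm ?_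
    rw [h.sum_degree, ← natDegree_binPolyR (n := n) hc, h.prod_eq]
    exact natDegree_prod_le _ _
  have hdeg_i := (Finset.sum_eq_sum_iff_of_le fun i _ => natDegree_binPolyR_le (d i) (cF i)).1 hdeg
    i (Finset.mem_univ i)
  have hlead : (binPolyR R (d i) (cF i)).leadingCoeff = cF i 0 := by
    rw [leadingCoeff, hdeg_i, coeff_binPolyR_self]
  rw [← hlead, leadingCoeff_ne_zero]
  exact ne_zero_of_dvd_ne_zero hF (h.binPolyR_dvd i)

variable (K) in
/-- The isomorphism `K_F ≃ ∏ K_{F_i}` attached to a coprime factorization. -/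
def equiv : KF R K n c ≃ₐ[R] ∀ i, KF R K (d i) (cF i) :=
  adjoinRootEquivPi R
    (fun i j hij => by
      simpa only [Function.onFun, binPoly_eq_map, coe_mapRingHom] using
        (h.pairwise_isCoprime hij).map (mapRingHom (algebraMap R K)))
    (by simp only [binPoly_eq_map, h.prod_eq, Polynomial.map_prod])

theorem equiv_aeval (u : R[X]) (i : ι) :
    h.equiv K (aeval (θF R K n c) u) i = aeval (θF R K (d i) (cF i)) u := by
  have hroot : h.equiv K (θF R K n c) i = θF R K (d i) (cF i) := adjoinRootEquivPi_root ..
  rw [← hroot]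
  exact (aeval_algHom_apply ((Pi.evalAlgHom R _ i).comp (h.equiv K).toAlgHom) _ u).symm

theorem isUnit_aeval_cofactor (i : ι) : IsUnit
    (aeval (θF R K (d i) (cF i)) (∏ j ∈ Finset.univ.erase i, binPolyR R (d j) (cF j))) := by
  obtain ⟨a, b, hab⟩ : IsCoprime (binPolyR R (d i) (cF i))
      (∏ j ∈ Finset.univ.erase i, binPolyR R (d j) (cF j)) :=
    IsCoprime.prod_right fun j hj => h.pairwise_isCoprime (Finset.ne_of_mem_erase hj).symm
  have heval := congrArg (aeval (θF R K (d i) (cF i))) hab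
  rw [map_add, map_mul, aeval_θF_binPolyR, mul_zero, zero_add, map_mul, map_one] at heval
  exact .of_mul_eq_one_right _ heval

omit h in
theorem aeval_sum_mul_cofactor (u : ι → R[X]) (i : ι) :
    aeval (θF R K (d i) (cF i))
        (∑ j, u j * ∏ l ∈ Finset.univ.erase j, binPolyR R (d l) (cF l)) =
      aeval (θF R K (d i) (cF i)) (u i) *
        aeval (θF R K (d i) (cF i)) (∏ l ∈ Finset.univ.erase i, binPolyR R (d l) (cF l)) := by
  rw [map_sum, Finset.sum_eq_single i, map_mul]
  · intro j _ hji
    rw [map_mul, map_prod, Finset.prod_eq_zero (Finset.mem_erase.2 ⟨hji.symm, Finset.mem_univ i⟩)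
      aeval_θF_binPolyR, mul_zero]
  · exact fun hi => absurd (Finset.mem_univ i) hi

/-- Partial fractions: the Chinese remainder isomorphism scales the lattices by units. -/
theorem mem_powerLattice_iff {x : KF R K n c} :
    x ∈ powerLattice R K n c ↔ ∀ i, ∃ y ∈ powerLattice R K (d i) (cF i), h.equiv K x i =
      y * aeval (θF R K (d i) (cF i)) (∏ j ∈ Finset.univ.erase i, binPolyR R (d j) (cF j)) := by
  have : Nontrivial R := (algebraMap R K).domain_nontrivial
  constructor
  · intro hx i
    obtain ⟨w, hw, rfl⟩ : ∃ w ∈ degreeLT R n, aeval (θF R K n c) w = x := hx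
    obtain ⟨u, hu, hwu⟩ := exists_eq_sum_mul_prod_erase (d := d) (i₀ := i₀)
      (f := fun i => binPolyR R (d i) (cF i)) (natDegree_binPolyR_le _ _)
      (fun i hi => monic_binPolyR (h.leadingCoeff_eq_one i hi))
      (fun i hi => natDegree_binPolyR (h.leadingCoeff_eq_one i hi ▸ one_ne_zero))
      h.pairwise_isCoprime (by rwa [h.sum_degree])
    refine ⟨_, aeval_mem_powerLattice (hu i), ?_⟩
    rw [h.equiv_aeval, hwu, aeval_sum_mul_cofactor]
  · intro hx
    choose y hy hxy using hx
    choose u hu huy using hy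
    have hux : x = aeval (θF R K n c)
        (∑ j, u j * ∏ l ∈ Finset.univ.erase j, binPolyR R (d l) (cF l)) := by
      refine (h.equiv K).injective (funext fun i => ?_)
      rw [hxy, h.equiv_aeval, aeval_sum_mul_cofactor, ← huy]
      rfl
    rw [hux]
    refine aeval_mem_powerLattice ?_
    rw [← h.sum_degree]
    exact sum_mul_prod_erase_mem_degreeLT (fun i => natDegree_binPolyR_le _ _) hu

theorem mem_powerLattice_div_iff {x : KF R K n c} :
    x ∈ powerLattice R K n c / powerLattice R K n c ↔ ∀ i, h.equiv K x i ∈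
      powerLattice R K (d i) (cF i) / powerLattice R K (d i) (cF i) := by
  simp only [Submodule.mem_div_iff_forall_mul_mem]
  constructor
  · intro hx i y hy
    set κ := aeval (θF R K (d i) (cF i)) (∏ j ∈ Finset.univ.erase i, binPolyR R (d j) (cF j))
    have hz : (h.equiv K).symm (Pi.single i (y * κ)) ∈ powerLattice R K n c := by
      refine h.mem_powerLattice_iff.2 fun j => ?_
      rw [AlgEquiv.apply_symm_apply]
      obtain rfl | hji := eq_or_ne j i
      · exact ⟨y, hy, Pi.single_eq_same ..⟩
      · exact ⟨0, zero_mem _, by rw [Pi.single_eq_of_ne hji, zero_mul]⟩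
    obtain ⟨y', hy', hxz⟩ := h.mem_powerLattice_iff.1 (hx _ hz) i
    rw [map_mul, Pi.mul_apply, AlgEquiv.apply_symm_apply, Pi.single_eq_same, ← mul_assoc] at hxz
    rwa [(h.isUnit_aeval_cofactor i).mul_right_cancel hxz]
  · intro hx z hz
    refine h.mem_powerLattice_iff.2 fun i => ?_
    obtain ⟨y, hy, hzy⟩ := h.mem_powerLattice_iff.1 hz i
    exact ⟨_, hx i y hy, by rw [map_mul, Pi.mul_apply, hzy, mul_assoc]⟩

variable [FaithfulSMul R K] (hc : c 0 ≠ 0) (hprim : (binPolyR R n c).contentIdeal = ⊤)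

include hc hprim

theorem mem_RFmod_iff {x : KF R K n c} :
    x ∈ RFmod R K n c ↔ ∀ i, h.equiv K x i ∈ RFmod R K (d i) (cF i) := by
  rw [RFmod_eq_powerLattice_div hc hprim, h.mem_powerLattice_div_iff]
  exact forall_congr' fun i => by
    rw [RFmod_eq_powerLattice_div (h.coeff_zero_ne_zero hc i) (h.contentIdeal_eq_top hprim i)]

theorem isMaxOrder_iff : IsMaxOrder R K n c ↔ ∀ i, IsMaxOrder R K (d i) (cF i) :=
  submodule_eq_iff_forall_eq_of_mem_iff (h.equiv K) (fun _ => h.mem_RFmod_iff hc hprim)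
    fun _ => (isIntegral_algEquiv (h.equiv K)).symm.trans isIntegral_pi_iff

theorem nonempty_RFalg_algEquiv : Nonempty (RFalg R K n c ≃ₐ[R]
    ((i : {i : ι // 1 ≤ d i}) → RFalg R K (d i.1) (cF i.1))) := by
  refine nonempty_algEquiv_pi_subtype (p := fun i => 1 ≤ d i)
    (T := fun i => RFalg R K (d i) (cF i)) (h.equiv K) (fun i hi => ?_) fun x => ?_
  · rw [Nat.lt_one_iff.1 (not_le.1 hi)]
    exact subsingleton_KF_zero (h.coeff_zero_ne_zero hc i)
  · simp only [← Subalgebra.mem_toSubmodule, toSubmodule_RFalg hc hprim, h.mem_RFmod_iff hc hprim,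
      toSubmodule_RFalg (h.coeff_zero_ne_zero hc _) (h.contentIdeal_eq_top hprim _)]

end IsCoprimeFactorization

/-! ### Irreducibility of maximal factors -/

section Irreducibility

variable {R K} {n : ℕ} {c : ℕ → R}

theorem RFmod_le_range_aeval_θF :
    RFmod R K n c ≤ Subalgebra.toSubmodule (aeval (θF R K n c) : R[X] →ₐ[R] KF R K n c).range := by
  refine RFmod_le_toSubmodule fun i _ _ => (AlgHom.mem_range _).2 ⟨binPolyR R i c - C (c i), ?_⟩
  rw [map_sub, ← ζF_add_algebraMap, aeval_C, add_sub_cancel_right]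

/-- Solving `ζ_(i+1) = θ (ζ_i + c_i)` downwards from `ζ_n = -c_n`, with `t = θ⁻¹`. -/
theorem ζF_sub_eq_neg_aeval {t : KF R K n c} (ht : θF R K n c * t = 1) {m : ℕ} (hm : m ≤ n) :
    ζF R K n c (n - m) = -aeval t (binPolyR R m fun j => c (n - j)) := by
  induction m with
  | zero => rw [Nat.sub_zero, ζF_self, binPolyR_zero, aeval_C, Nat.sub_zero]
  | succ m ih =>
    have hrec := ζF_succ (K := K) (n := n) (c := c) (n - (m + 1))
    rw [← ζF_add_algebraMap, show n - (m + 1) + 1 = n - m by omega, ih (by omega)] at hrec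
    rw [binPolyR_succ, map_add, map_mul, aeval_X, aeval_C]
    linear_combination (-ζF R K n c (n - (m + 1)) -
      algebraMap R (KF R K n c) (c (n - (m + 1)))) * ht - t * hrec

theorem aeval_reverse_binPolyR {t : KF R K n c} (ht : θF R K n c * t = 1) :
    aeval t (binPolyR R n fun j => c (n - j)) = 0 := by
  rw [← neg_eq_zero, ← ζF_sub_eq_neg_aeval ht le_rfl, Nat.sub_self, ζF_zero]

theorem RFmod_le_range_aeval_inv {t : KF R K n c} (ht : θF R K n c * t = 1) :
    RFmod R K n c ≤ Subalgebra.toSubmodule (aeval t : R[X] →ₐ[R] KF R K n c).range := by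
  refine RFmod_le_toSubmodule fun i _ hi =>
    (AlgHom.mem_range _).2 ⟨-binPolyR R (n - i) fun j => c (n - j), ?_⟩
  rw [map_neg, ← ζF_sub_eq_neg_aeval ht (Nat.sub_le n i), Nat.sub_sub_self (by omega)]

theorem isUnit_θF (hn : 1 ≤ n) (hcn : IsUnit (c n)) : IsUnit (θF R K n c) := by
  obtain ⟨m, rfl⟩ := Nat.exists_eq_add_of_le' hn
  refine isUnit_of_mul_isUnit_left (y := aeval (θF R K (m + 1) c) (binPolyR R m c)) ?_
  rw [← ζF_succ, ζF_self]
  exact (hcn.map _).neg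

theorem not_isUnit_binPoly [FaithfulSMul R K] (hn : 1 ≤ n) (hc : c 0 ≠ 0) :
    ¬IsUnit (binPoly R K n c) :=
  not_isUnit_of_natDegree_pos _ ((natDegree_binPoly (K := K) hc).symm ▸ hn)

variable [IsLocalRing R] {k : Type} [Field k] {π : R →+* k} (hπ : Function.Surjective π)
  (hsq : Squarefree (binPoly R K n c))

include hπ hsq

theorem irreducible_binPoly_of_RFmod_le_range (hunit : ¬IsUnit (binPoly R K n c))
    (hmax : IsMaxOrder R K n c) {t : KF R K n c}
    (hle : RFmod R K n c ≤ Subalgebra.toSubmodule (aeval t : R[X] →ₐ[R] KF R K n c).range)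
    {g : R[X]} (hg : g.Monic) (hgt : aeval t g = 0) {Q : k[X]} (hQ : Irreducible Q) {e : ℕ}
    (hdvd : g.map π ∣ Q ^ e) : Irreducible (binPoly R K n c) := by
  refine irreducible_of_forall_isIdempotentElem hsq hunit fun x hx => ?_
  have : Nontrivial (KF R K n c) :=
    Ideal.Quotient.nontrivial_iff.2 (Ideal.span_singleton_eq_top.not.2 hunit)
  have : IsLocalRing (aeval t : R[X] →ₐ[R] KF R K n c).range :=
    isLocalRing_of_surjective_of_dvd_pow hπ (AlgHom.rangeRestrict_surjective _) hg
      (Subtype.ext hgt) hQ hdvd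
  have hx_int : IsIntegral R x :=
    ⟨X ^ 2 - X, (monic_X_pow 2).sub_of_left (by rw [degree_X_pow, degree_X]; norm_num),
      by simp [sq, hx.eq]⟩
  have hx_mem : x ∈ (aeval t : R[X] →ₐ[R] KF R K n c).range := hle (hmax ▸ hx_int)
  have hx_idem : IsIdempotentElem (⟨x, hx_mem⟩ : (aeval t : R[X] →ₐ[R] KF R K n c).range) :=
    Subtype.ext hx
  exact (eq_zero_or_eq_one_of_isIdempotentElem hx_idem).imp
    (congrArg Subtype.val) (congrArg Subtype.val)

variable [FaithfulSMul R K] (hn : 1 ≤ n)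

include hn

theorem irreducible_binPoly_of_monic (hmax : IsMaxOrder R K n c) (hc : c 0 = 1) {Q : k[X]}
    (hQ : Irreducible Q) {e : ℕ} (hdvd : (binPolyR R n c).map π ∣ Q ^ e) :
    Irreducible (binPoly R K n c) := by
  have hunit := not_isUnit_binPoly (K := K) hn (hc ▸ one_ne_zero : c 0 ≠ 0)
  exact irreducible_binPoly_of_RFmod_le_range hπ hsq hunit hmax RFmod_le_range_aeval_θF
    (monic_binPolyR hc) aeval_θF_binPolyR hQ hdvd

theorem irreducible_binPoly_of_map_eq_C (hmax : IsMaxOrder R K n c) (hc : c 0 ≠ 0)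
    (hmap : ∀ j < n, π (c j) = 0) (hmap_n : π (c n) ≠ 0) : Irreducible (binPoly R K n c) := by
  have := IsLocalHom.of_surjective π hπ
  have hcn : IsUnit (c n) := (isUnit_map_iff π _).1 hmap_n.isUnit
  have hunit := not_isUnit_binPoly (K := K) hn hc
  obtain ⟨t, ht⟩ := (isUnit_θF (K := K) hn hcn).exists_right_inv
  obtain ⟨s, hs⟩ := hcn.exists_left_inv
  have hg : (C s * binPolyR R n fun j => c (n - j)).Monic := by
    refine monic_of_natDegree_le_of_coeff_eq_one n ?_ ?_
    · exact (natDegree_C_mul_le _ _).trans (natDegree_binPolyR_le _ _)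
    · rw [coeff_C_mul, coeff_binPolyR_self, Nat.sub_zero, hs]
  refine irreducible_binPoly_of_RFmod_le_range hπ hsq hunit hmax (RFmod_le_range_aeval_inv ht) hg
    (by rw [map_mul, aeval_reverse_binPolyR ht, mul_zero]) irreducible_X (e := n) ?_
  rw [Polynomial.map_mul, map_C, map_binPolyR, binPolyR_eq_C_mul_X_pow n.zero_le, ← mul_assoc,
    ← C_mul, ← map_mul, Nat.sub_zero, hs, map_one, C_1, one_mul]
  exact fun j _ hj => hmap _ (by omega)

end Irreducibility

/-! ### Canonical factorizations -/

/-- A canonical factorization `F = ∏ F_i` of a binary form over a local ring `R`, relative to the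
residue map `π : R → k`: the form `F_{i₀}` reduces to a nonzero multiple of a power of `z`, and the
other `F_i` are monic and reduce to powers of pairwise coprime irreducible forms. -/
structure IsCanonicalFactorization {R k : Type} [CommRing R] [Field k] (π : R →+* k) {ι : Type*}
    [Fintype ι] (n : ℕ) (c : ℕ → R) (d : ι → ℕ) (cF : ι → ℕ → R) (i₀ : ι) : Prop where
  sum_degree : ∑ i, d i = n
  prod_eq : binPolyR R n c = ∏ i, binPolyR R (d i) (cF i)
  map_eq_zero : ∀ j < d i₀, π (cF i₀ j) = 0
  map_ne_zero : π (cF i₀ (d i₀)) ≠ 0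
  leadingCoeff_eq_one : ∀ i ≠ i₀, cF i 0 = 1
  exists_map_eq_pow : ∀ i ≠ i₀, ∃ (e : ℕ) (Q : k[X]),
    Irreducible Q ∧ (binPolyR R (d i) (cF i)).map π = Q ^ e
  isCoprime_map : ∀ i j, i ≠ i₀ → j ≠ i₀ → i ≠ j →
    IsCoprime ((binPolyR R (d i) (cF i)).map π) ((binPolyR R (d j) (cF j)).map π)

namespace IsCanonicalFactorization

variable {R K} {k : Type} [Field k] {π : R →+* k} {ι : Type*} [Fintype ι] {n : ℕ} {c : ℕ → R}
  {d : ι → ℕ} {cF : ι → ℕ → R} {i₀ : ι} (h : IsCanonicalFactorization π n c d cF i₀)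

include h

theorem isUnit_map : IsUnit ((binPolyR R (d i₀) (cF i₀)).map π) := by
  rw [map_binPolyR, binPolyR_eq_C_mul_X_pow le_rfl
    fun j hj hjd => h.map_eq_zero j (lt_of_le_of_ne hj hjd), Nat.sub_self, pow_zero, mul_one]
  exact isUnit_C.2 h.map_ne_zero.isUnit

theorem map_binPolyR_ne_zero : (binPolyR R n c).map π ≠ 0 := by
  rw [h.prod_eq, Polynomial.map_prod, Finset.prod_ne_zero_iff]
  intro i _
  obtain rfl | hi := eq_or_ne i i₀
  · exact h.isUnit_map.ne_zero
  · exact ((monic_binPolyR (h.leadingCoeff_eq_one i hi)).map π).ne_zero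

theorem isCoprimeFactorization [IsLocalHom π] : IsCoprimeFactorization n c d cF i₀ where
  sum_degree := h.sum_degree
  prod_eq := h.prod_eq
  leadingCoeff_eq_one := h.leadingCoeff_eq_one
  pairwise_isCoprime := by
    have hleft : ∀ i j, i ≠ i₀ → i ≠ j →
        IsCoprime (binPolyR R (d i) (cF i)) (binPolyR R (d j) (cF j)) := fun i j hi hij => by
      refine isCoprime_of_isCoprime_map (φ := π) (monic_binPolyR (h.leadingCoeff_eq_one i hi)) ?_
      obtain rfl | hj := eq_or_ne j i₀
      · exact isCoprime_one_right.of_isCoprime_of_dvd_right (isUnit_iff_dvd_one.1 h.isUnit_map)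
      · exact h.isCoprime_map i j hi hj hij
    intro i j hij
    obtain rfl | hi := eq_or_ne i i₀
    · exact (hleft j i hij.symm hij.symm).symm
    · exact hleft i j hi hij

theorem irreducible_binPoly [IsLocalRing R] [FaithfulSMul R K] (hπ : Function.Surjective π)
    (hc : c 0 ≠ 0) (hsq : Squarefree (binPoly R K n c)) {i : ι} (hi : 1 ≤ d i)
    (hmax : IsMaxOrder R K (d i) (cF i)) : Irreducible (binPoly R K (d i) (cF i)) := by
  have := IsLocalHom.of_surjective π hπ
  have hcop := h.isCoprimeFactorization
  have hsq_i : Squarefree (binPoly R K (d i) (cF i)) := by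
    refine hsq.squarefree_of_dvd ?_
    rw [binPoly_eq_map, binPoly_eq_map]
    exact map_dvd (algebraMap R K) (hcop.binPolyR_dvd i)
  obtain rfl | hi₀ := eq_or_ne i i₀
  · exact irreducible_binPoly_of_map_eq_C hπ hsq_i hi hmax (hcop.coeff_zero_ne_zero hc i)
      h.map_eq_zero h.map_ne_zero
  · obtain ⟨e, Q, hQ, hQe⟩ := h.exists_map_eq_pow i hi₀
    exact irreducible_binPoly_of_monic hπ hsq_i hi hmax (h.leadingCoeff_eq_one i hi₀) hQ hQe.dvd

end IsCanonicalFactorization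

theorem isMaxOrder_zero {R K : Type} [CommRing R] [Field K] [Algebra R K] [FaithfulSMul R K]
    {c : ℕ → R} (hc : c 0 ≠ 0) : IsMaxOrder R K 0 c := by
  have := subsingleton_KF_zero (K := K) hc
  exact Subsingleton.elim _ _

theorem maximality_along_canonical_factorization_general {R K k : Type} [CommRing R]
    [IsLocalRing R] [Field K] [Algebra R K] [FaithfulSMul R K] [Field k] {π : R →+* k}
    (hπ : Function.Surjective π) {ι : Type*} [Fintype ι] {n : ℕ} {c : ℕ → R} {d : ι → ℕ}
    {cF : ι → ℕ → R} {i₀ : ι} (h : IsCanonicalFactorization π n c d cF i₀) (hc : c 0 ≠ 0)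
    (hsq : Squarefree (binPoly R K n c)) :
    (IsMaxOrder R K n c ↔ ∀ i, 1 ≤ d i → IsMaxOrder R K (d i) (cF i)) ∧
    (IsMaxOrder R K n c → ∀ i, 1 ≤ d i → Irreducible (binPoly R K (d i) (cF i))) ∧
    Nonempty (RFalg R K n c ≃ₐ[R] ((i : {i : ι // 1 ≤ d i}) → RFalg R K (d i.1) (cF i.1))) := by
  have := IsLocalHom.of_surjective π hπ
  have hcop := h.isCoprimeFactorization
  have hprim := contentIdeal_eq_top_of_map_ne_zero hπ h.map_binPolyR_ne_zero
  have hmax_zero : ∀ i, ¬1 ≤ d i → IsMaxOrder R K (d i) (cF i) := fun i hi => by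
    rw [Nat.lt_one_iff.1 (not_le.1 hi)]
    exact isMaxOrder_zero (hcop.coeff_zero_ne_zero hc i)
  have hiff := hcop.isMaxOrder_iff (K := K) hc hprim
  refine ⟨hiff.trans (forall_congr' fun i => ⟨fun hi _ => hi, fun hi => ?_⟩), fun hmax i hi => ?_,
    hcop.nonempty_RFalg_algEquiv hc hprim⟩
  · exact (em (1 ≤ d i)).elim hi (hmax_zero i)
  · exact h.irreducible_binPoly hπ hc hsq hi (hiff.1 hmax i)

/-- Lemma 3.3: given a canonical factorization `F = ∏ F_i` over `ℤ_p`,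
`R_F` is maximal iff each `R_{F_i}` (for nonconstant `F_i`) is; in that case each
nonconstant `F_i` is irreducible and `R_F ≅ ∏ R_{F_i}` as `ℤ_p`-algebras. -/
theorem maximality_along_canonical_factorization
    (p : ℕ) [Fact p.Prime]
    (n : ℕ) (hn : 3 ≤ n) (c : ℕ → ℤ_[p]) (hf0 : c 0 ≠ 0)
    (hsep : SepDegP p n c) (hprim : PrimP p n c)
    (m : ℕ) (hm : 0 < m) (d : Fin m → ℕ) (cF : Fin m → ℕ → ℤ_[p])
    (hsum : ∑ i, d i = n)
    (hprod : binPolyR ℤ_[p] n c = ∏ i, binPolyR ℤ_[p] (d i) (cF i))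
    (hlead : cF ⟨0, hm⟩ 0 = c 0)
    (hF1a : ∀ j < d ⟨0, hm⟩, PadicInt.toZMod (cF ⟨0, hm⟩ j) = 0)
    (hF1b : IsUnit (PadicInt.toZMod (cF ⟨0, hm⟩ (d ⟨0, hm⟩))))
    (hFi : ∀ i : Fin m, i ≠ ⟨0, hm⟩ → cF i 0 = 1 ∧
      ∃ (e : ℕ) (Q : Polynomial (ZMod p)), 0 < e ∧ Q.Monic ∧ Irreducible Q ∧
        d i = e * Q.natDegree ∧ redPolyDeg p (d i) (cF i) = Q ^ e)
    (hcop : ∀ i j : Fin m, i ≠ ⟨0, hm⟩ → j ≠ ⟨0, hm⟩ → i ≠ j →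
      IsCoprime (redPolyDeg p (d i) (cF i)) (redPolyDeg p (d j) (cF j))) :
    (IsMaxOrder ℤ_[p] ℚ_[p] n c ↔
      ∀ i : Fin m, 1 ≤ d i → IsMaxOrder ℤ_[p] ℚ_[p] (d i) (cF i)) ∧
    (IsMaxOrder ℤ_[p] ℚ_[p] n c →
      (∀ i : Fin m, 1 ≤ d i → Irreducible (binPoly ℤ_[p] ℚ_[p] (d i) (cF i))) ∧
      Nonempty (↥(RFalg ℤ_[p] ℚ_[p] n c) ≃ₐ[ℤ_[p]]
        ((i : {i : Fin m // 1 ≤ d i}) → ↥(RFalg ℤ_[p] ℚ_[p] (d i.1) (cF i.1))))) := by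
  have hred : ∀ i, (binPolyR ℤ_[p] (d i) (cF i)).map PadicInt.toZMod = redPolyDeg p (d i) (cF i) :=
    fun i => map_binPolyR PadicInt.toZMod (d i) (cF i)
  have hcan : IsCanonicalFactorization PadicInt.toZMod n c d cF ⟨0, hm⟩ :=
    { sum_degree := hsum
      prod_eq := hprod
      map_eq_zero := hF1a
      map_ne_zero := hF1b.ne_zero
      leadingCoeff_eq_one := fun i hi => (hFi i hi).1
      exists_map_eq_pow := fun i hi =>
        let ⟨e, Q, _, _, hQ, _, hQe⟩ := (hFi i hi).2
        ⟨e, Q, hQ, (hred i).trans hQe⟩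
      isCoprime_map := fun i j hi hj hij => by
        rw [hred, hred]
        exact hcop i j hi hj hij }
  obtain ⟨hiff, hirr, hiso⟩ := maximality_along_canonical_factorization_general
    (ZMod.ringHom_surjective _) hcan hf0 hsep.1.squarefree
  exact ⟨hiff, fun hmax => ⟨hirr hmax, hiso⟩⟩


end BHS
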